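/- Let M ≥ 1 be an integer, η ∈ (0,1), and let r, r′, D be integers with 1 ≤ r ≤ r′ ≤ M, D ≥ r′+1, and (D+1)·η ≥ M. Define the degree distribution Ψ^r on {1, …, D} by Ψ^r_d = 0 for d ≤ r, Ψ^r_d = r/(d(d−1)) for r+1 ≤ d ≤ D−1, and Ψ^r_D = r/(D−1). Then S_{r′}(x; Ψ^r) + r·ln(1−x) > 0 for all x with 0 < x ≤ 1−η. -/

import Mathlib

/-- The regularized incomplete beta function with positive integer parameters `a`, `b`. -/
noncomputable def incBeta (a b : ℕ) (x : ℝ) : ℝ :=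
  ∑ j ∈ Finset.Icc a (a + b - 1),
    (Nat.choose (a + b - 1) j : ℝ) * x ^ j * (1 - x) ^ (a + b - 1 - j)

/-- `S_r(x; Ψ) = ∑_{d=r+1}^D d Ψ_d I_{d-r,r}(x) + ∑_{d=1}^{min(r,D)} d Ψ_d`. -/
noncomputable def Sfun (D r : ℕ) (Ψ : ℕ → ℝ) (x : ℝ) : ℝ :=
  (∑ d ∈ Finset.Icc (r + 1) D, (d : ℝ) * Ψ d * incBeta (d - r) r x) +
    ∑ d ∈ Finset.Icc 1 (min r D), (d : ℝ) * Ψ d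

/-- The degree distribution `Ψ^r`: `Ψ^r_d = 0` for `d ≤ r`,
`Ψ^r_d = r/(d(d-1))` for `r+1 ≤ d ≤ D-1`, `Ψ^r_D = r/(D-1)`. -/
noncomputable def PsiR (r D : ℕ) : ℕ → ℝ := fun d =>
  if d ≤ r then 0
  else if d < D then (r : ℝ) / ((d : ℝ) * ((d : ℝ) - 1))
  else if d = D then (r : ℝ) / ((D : ℝ) - 1)
  else 0

/-- Binomial point mass `P(Bin(n,y) = j)`. -/
noncomputable def bmass (y : ℝ) (j n : ℕ) : ℝ :=
  (Nat.choose n j : ℝ) * y ^ j * (1 - y) ^ (n - j)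

/-- Binomial lower tail `P(Bin(n,y) < s)`. -/
noncomputable def ptail (y : ℝ) (s n : ℕ) : ℝ := ∑ j ∈ Finset.range s, bmass y j n

lemma bmass_zero_succ (y : ℝ) (n : ℕ) : bmass y 0 (n + 1) = (1 - y) * bmass y 0 n := by
  simp [bmass, pow_succ]; ring

lemma bmass_succ_succ (y : ℝ) (j n : ℕ) :
    bmass y (j + 1) (n + 1) = y * bmass y j n + (1 - y) * bmass y (j + 1) n := by
  unfold bmass
  rw [Nat.choose_succ_succ]
  rcases Nat.lt_or_ge n (j + 1) with h | h
  · rw [Nat.choose_eq_zero_of_lt h]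
    simp only [Nat.add_sub_add_right]; push_cast; ring
  · obtain ⟨k, rfl⟩ := Nat.exists_eq_add_of_le h
    have e1 : j + 1 + k + 1 - (j + 1) = k + 1 := by omega
    have e2 : j + 1 + k - j = k + 1 := by omega
    have e3 : j + 1 + k - (j + 1) = k := by omega
    rw [e1, e2, e3]; push_cast; ring

lemma ptail_succ (y : ℝ) (s n : ℕ) : ptail y (s + 1) n = ptail y s n + bmass y s n := by
  unfold ptail; rw [Finset.sum_range_succ]

lemma ptail_rec (y : ℝ) (s n : ℕ) :
    ptail y (s + 1) (n + 1) = (1 - y) * ptail y (s + 1) n + y * ptail y s n := by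
  induction s with
  | zero => simp [ptail, bmass_zero_succ]
  | succ s ih =>
    rw [ptail_succ, ih, bmass_succ_succ, ptail_succ y (s + 1) n, ptail_succ y s n]; ring

lemma bmass_nonneg {y : ℝ} (h0 : 0 < y) (h1 : y < 1) (j n : ℕ) : 0 ≤ bmass y j n := by
  have : 0 < 1 - y := by linarith
  unfold bmass; positivity

lemma ptail_nonneg {y : ℝ} (h0 : 0 < y) (h1 : y < 1) (s n : ℕ) : 0 ≤ ptail y s n :=
  Finset.sum_nonneg fun j _ => bmass_nonneg h0 h1 j n

lemma ptail_pos {y : ℝ} (h0 : 0 < y) (h1 : y < 1) (s n : ℕ) : 0 < ptail y (s + 1) n := by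
  have h2 : 0 < 1 - y := by linarith
  have h : 0 < bmass y 0 n := by unfold bmass; simp; positivity
  exact lt_of_lt_of_le h (Finset.single_le_sum (f := fun j => bmass y j n)
    (fun j _ => bmass_nonneg h0 h1 j n) (by simp))

lemma ptail_one (y : ℝ) (s n : ℕ) (h : n < s) : ptail y s n = 1 := by
  induction n generalizing s with
  | zero =>
    obtain ⟨s, rfl⟩ : ∃ t, s = t + 1 := ⟨s - 1, by omega⟩
    unfold ptail
    rw [Finset.sum_range_succ']
    simp [bmass]
  | succ n ih =>
    obtain ⟨s, rfl⟩ : ∃ t, s = t + 1 := ⟨s - 1, by omega⟩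
    rw [ptail_rec, ih _ (by omega), ih _ (by omega)]; ring

/-- mean residual time bound -/
lemma sum_ptail_le {y : ℝ} (h0 : 0 < y) (h1 : y < 1) (s N K : ℕ) :
    y * ∑ n ∈ Finset.range K, ptail y s (N + n) ≤ s * ptail y s N := by
  induction s with
  | zero => simp [ptail]
  | succ s ih =>
    have key : y * ∑ n ∈ Finset.range K, ptail y (s + 1) (N + n)
        = ptail y (s + 1) N - ptail y (s + 1) (N + K)
          + y * ∑ n ∈ Finset.range K, ptail y s (N + n) := by
      clear ih
      induction K with
      | zero => simp
      | succ K ih =>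
        rw [Finset.sum_range_succ, Finset.sum_range_succ, mul_add, mul_add, ih, ← add_assoc N K 1,
          ptail_rec]
        ring
    have hK := ptail_nonneg h0 h1 (s + 1) (N + K)
    have hm : ptail y s N ≤ ptail y (s + 1) N := by
      rw [ptail_succ]; linarith [bmass_nonneg h0 h1 s N]
    have : (s : ℝ) * ptail y s N ≤ s * ptail y (s + 1) N := by gcongr
    rw [key]; push_cast; linarith

lemma hasSum_bmass {y : ℝ} (h0 : 0 < y) (h1 : y < 1) (k : ℕ) :
    HasSum (fun n : ℕ => bmass y (k + 1) (n + 1) / ((n : ℝ) + 1)) (1 / ((k : ℝ) + 1)) := by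
  have hr : ‖1 - y‖ < 1 := by rw [Real.norm_eq_abs, abs_lt]; constructor <;> linarith
  have h := (hasSum_choose_mul_geometric_of_norm_lt_one k hr).mul_left (y ^ (k + 1) / ((k : ℝ) + 1))
  have e : y ^ (k + 1) / ((k : ℝ) + 1) * (1 / (1 - (1 - y)) ^ (k + 1)) = 1 / ((k : ℝ) + 1) := by
    have : (k : ℝ) + 1 ≠ 0 := by positivity
    have : y ^ (k + 1) ≠ 0 := by positivity
    rw [sub_sub_cancel]; field_simp
  rw [e] at h
  rw [← hasSum_nat_add_iff' k]
  have hz : ∑ i ∈ Finset.range k, bmass y (k + 1) (i + 1) / ((i : ℝ) + 1) = 0 := by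
    apply Finset.sum_eq_zero
    intro i hi
    have : i + 1 < k + 1 := by simpa using hi
    simp [bmass, Nat.choose_eq_zero_of_lt this]
  rw [hz, sub_zero]
  have hfun : (fun m : ℕ => bmass y (k + 1) (m + k + 1) / (((m + k : ℕ) : ℝ) + 1)) =
      fun m : ℕ => y ^ (k + 1) / ((k : ℝ) + 1) * (((m + k).choose k : ℝ) * (1 - y) ^ m) := by
   funext m
   have hc : ((m + k + 1 : ℕ) : ℝ) * (Nat.choose (m + k) k : ℝ)
       = (Nat.choose (m + k + 1) (k + 1) : ℝ) * ((k + 1 : ℕ) : ℝ) := by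
     exact_mod_cast Nat.add_one_mul_choose_eq (m + k) k
   have e2 : m + k + 1 - (k + 1) = m := by omega
   unfold bmass
   rw [e2]
   push_cast at hc ⊢
   have : (k : ℝ) + 1 ≠ 0 := by positivity
   have : (m : ℝ) + k + 1 ≠ 0 := by positivity
   field_simp
   linear_combination (-(1 - y) ^ m) * hc
  rw [hfun]
  exact h

lemma hasSum_ptail {y : ℝ} (h0 : 0 < y) (h1 : y < 1) (s : ℕ) :
    HasSum (fun n : ℕ => ptail y (s + 1) (n + 1) / ((n : ℝ) + 1))
      (-Real.log y + ∑ i ∈ Finset.range s, 1 / ((i : ℝ) + 1)) := by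
  induction s with
  | zero =>
    have hr : |1 - y| < 1 := by rw [abs_lt]; constructor <;> linarith
    have h := Real.hasSum_pow_div_log_of_abs_lt_one hr
    simpa [ptail, bmass] using h
  | succ s ih =>
    have h := ih.add (hasSum_bmass h0 h1 s)
    rw [Finset.sum_range_succ, ← add_assoc]
    convert h using 2 with n
    rw [ptail_succ y (s + 1), add_div]

lemma main_ineq {y : ℝ} (h0 : 0 < y) (h1 : y < 1) (s N : ℕ) (hN : (s : ℝ) + 1 ≤ (N + 2) * y) :
    -Real.log y + ∑ i ∈ Finset.range s, 1 / ((i : ℝ) + 1)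
      < ∑ n ∈ Finset.range N, ptail y (s + 1) (n + 1) / ((n : ℝ) + 1) + ptail y (s + 1) N := by
  have hs := hasSum_ptail h0 h1 s
  set p := ptail y (s + 1) with hp
  set Q := ∑ n ∈ Finset.range N, p (n + 1) / ((n : ℝ) + 1)
  set δ := p (N + 2) * (1 / ((N : ℝ) + 1) - 1 / ((N : ℝ) + 2)) with hδ
  have hpp : ∀ n, 0 < p n := fun n => ptail_pos h0 h1 s n
  have hN1 : (0 : ℝ) < (N : ℝ) + 1 := by positivity
  have hδ0 : 0 < δ := by
    apply mul_pos (hpp _)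
    rw [sub_pos]
    apply one_div_lt_one_div_of_lt hN1; linarith
  have hb : ∀ K : ℕ, ∑ n ∈ Finset.range (N + (K + 2)), p (n + 1) / ((n : ℝ) + 1)
      ≤ Q + p N - δ := by
    intro K
    rw [Finset.sum_range_add]
    have hsum := sum_ptail_le h0 h1 (s + 1) N (K + 2 + 1)
    rw [Finset.sum_range_succ'] at hsum
    simp only [← hp] at hsum
    have hle : ∑ n ∈ Finset.range (K + 2), p (N + n + 1) / (((N + n : ℕ) : ℝ) + 1)
        ≤ (∑ n ∈ Finset.range (K + 2), p (N + (n + 1))) / ((N : ℝ) + 1) - δ := by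
      rw [Finset.sum_div, Finset.sum_range_succ', Finset.sum_range_succ',
        Finset.sum_range_succ' (fun n => p (N + (n + 1)) / ((N : ℝ) + 1)),
        Finset.sum_range_succ' (fun n => p (N + (n + 1 + 1)) / ((N : ℝ) + 1))]
      have h3 : ∑ n ∈ Finset.range K, p (N + (n + 1 + 1) + 1) / (((N + (n + 1 + 1) : ℕ) : ℝ) + 1)
          ≤ ∑ n ∈ Finset.range K, p (N + (n + 1 + 1 + 1)) / ((N : ℝ) + 1) := by
        apply Finset.sum_le_sum
        intro n _
        have := (hpp (N + (n + 1 + 1 + 1))).le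
        have e : N + (n + 1 + 1) + 1 = N + (n + 1 + 1 + 1) := by omega
        rw [e]
        apply div_le_div_of_nonneg_left this hN1
        push_cast
        have : (0 : ℝ) ≤ n := by positivity
        linarith
      have h4 : p (N + (0 + 1) + 1) / (((N + (0 + 1) : ℕ) : ℝ) + 1)
          = p (N + (0 + 1 + 1)) / ((N : ℝ) + 1) - δ := by
        have e : (((N + (0 + 1) : ℕ) : ℝ) + 1) = (N : ℝ) + 2 := by push_cast; ring
        have e2 : N + (0 + 1) + 1 = N + 2 := by omega
        have e3 : N + (0 + 1 + 1) = N + 2 := by omega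
        rw [e, e2, e3, hδ]; ring
      have h5 : p (N + 0 + 1) / (((N + 0 : ℕ) : ℝ) + 1) = p (N + (0 + 1)) / ((N : ℝ) + 1) := by
        simp
      linarith
    have hS : ∑ n ∈ Finset.range (K + 2), p (N + (n + 1)) ≤ p N * ((N : ℝ) + 1) := by
      have h6 : ((s + 1 : ℕ) : ℝ) * p N ≤ (N + 2) * y * p N := by
        push_cast
        exact mul_le_mul_of_nonneg_right hN (hpp N).le
      have h7 : y * (∑ n ∈ Finset.range (K + 2), p (N + (n + 1)) + p (N + 0))
          ≤ y * ((N + 2) * p N) := by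
        calc _ ≤ _ := hsum
          _ ≤ _ := h6
          _ = _ := by ring
      have h8 := le_of_mul_le_mul_left h7 h0
      simp only [add_zero] at h8
      linarith
    have : (∑ n ∈ Finset.range (K + 2), p (N + (n + 1))) / ((N : ℝ) + 1) ≤ p N := by
      rwa [div_le_iff₀ hN1]
    linarith
  have hlim := (hs.tendsto_sum_nat).comp (Filter.tendsto_add_atTop_nat (N + 2))
  have := le_of_tendsto' hlim (b := Q + p N - δ) (fun K => by
    have := hb K
    have e : K + (N + 2) = N + (K + 2) := by omega
    simpa only [Function.comp, e] using this)
  linarith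

lemma incBeta_eq (s n : ℕ) (h : s ≤ n) (x : ℝ) :
    incBeta (n + 1 - s) s x = ptail (1 - x) s n := by
  unfold incBeta ptail
  have e : n + 1 - s + s - 1 = n := by omega
  rw [e]
  apply Finset.sum_nbij' (fun j => n - j) (fun j => n - j)
  · intro j hj; simp at hj ⊢; omega
  · intro j hj; simp at hj ⊢; omega
  · intro j hj; simp at hj ⊢; omega
  · intro j hj; simp at hj ⊢; omega
  · intro j hj
    simp at hj
    unfold bmass
    rw [Nat.choose_symm hj.2, sub_sub_cancel, Nat.sub_sub_self hj.2]; ring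

theorem Sfun_PsiR_pos (M : ℕ) (hM : 1 ≤ M) (η : ℝ) (hη0 : 0 < η) (hη1 : η < 1)
    (r r' D : ℕ) (hr : 1 ≤ r) (hrr' : r ≤ r') (hr'M : r' ≤ M) (hD : r' + 1 ≤ D)
    (hDη : (M : ℝ) ≤ ((D : ℝ) + 1) * η)
    (x : ℝ) (hx0 : 0 < x) (hx1 : x ≤ 1 - η) :
    Sfun D r' (PsiR r D) x + (r : ℝ) * Real.log (1 - x) > 0 := by
  obtain ⟨N, rfl⟩ : ∃ N, D = N + 1 := ⟨D - 1, by omega⟩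
  obtain ⟨s, rfl⟩ : ∃ s, r' = s + 1 := ⟨r' - 1, by omega⟩
  have hsN : s + 1 ≤ N := by omega
  have hy0 : 0 < 1 - x := by linarith
  have hy1 : 1 - x < 1 := by linarith
  have hNy : (s : ℝ) + 1 ≤ (N + 2) * (1 - x) := by
    have h1 : ((s + 1 : ℕ) : ℝ) ≤ M := by exact_mod_cast hr'M
    have h2 : ((N : ℝ) + 2) * η ≤ (N + 2) * (1 - x) := by
      apply mul_le_mul_of_nonneg_left _ (by positivity); linarith
    push_cast at h1 hDη
    linarith
  have hmain := main_ineq hy0 hy1 s N hNy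
  have hNpos : (0 : ℝ) < N := by exact_mod_cast (by omega : 0 < N)
  have hpsi_nonneg : ∀ d, 1 ≤ d → 0 ≤ PsiR r (N + 1) d := by
    intro d hd
    have : (1 : ℝ) ≤ d := by exact_mod_cast hd
    have h1 : (0 : ℝ) ≤ (d : ℝ) - 1 := by linarith
    unfold PsiR
    push_cast
    rw [add_sub_cancel_right]
    split_ifs <;> positivity
  have hsec : 0 ≤ ∑ d ∈ Finset.Icc 1 (min (s + 1) (N + 1)), (d : ℝ) * PsiR r (N + 1) d := by
    apply Finset.sum_nonneg
    intro d hd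
    simp only [Finset.mem_Icc] at hd
    exact mul_nonneg (by positivity) (hpsi_nonneg d hd.1)
  have hfirst : ∑ d ∈ Finset.Icc (s + 1 + 1) (N + 1),
      (d : ℝ) * PsiR r (N + 1) d * incBeta (d - (s + 1)) (s + 1) x
      = r * (∑ n ∈ Finset.Ico s N, ptail (1 - x) (s + 1) (n + 1) / ((n : ℝ) + 1)
          + ptail (1 - x) (s + 1) N) := by
    have hmid : ∀ n ∈ Finset.Ico s (N - 1),
        ((n + 2 : ℕ) : ℝ) * PsiR r (N + 1) (n + 2) * incBeta (n + 2 - (s + 1)) (s + 1) x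
        = r * (ptail (1 - x) (s + 1) (n + 1) / ((n : ℝ) + 1)) := by
      intro n hn
      simp only [Finset.mem_Ico] at hn
      have hb := incBeta_eq (s + 1) (n + 1) (by omega) x
      rw [show n + 2 = n + 1 + 1 from rfl, hb]
      unfold PsiR
      rw [if_neg (by omega), if_pos (by omega)]
      push_cast
      have : (n : ℝ) + 1 ≠ 0 := by positivity
      have : (n : ℝ) + 1 + 1 ≠ 0 := by positivity
      rw [add_sub_cancel_right]
      field_simp
    have hset : Finset.Icc (s + 1 + 1) (N + 1) = Finset.Ico (s + 2) (N + 2) := by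
      ext; simp; omega
    obtain ⟨L, rfl⟩ : ∃ L, N = L + 1 := ⟨N - 1, by omega⟩
    rw [hset, ← Finset.sum_Ico_add' (fun d : ℕ => (d : ℝ) * PsiR r (L + 1 + 1) d *
      incBeta (d - (s + 1)) (s + 1) x) s (L + 1) 2,
      Finset.sum_Ico_succ_top (by omega), Finset.sum_Ico_succ_top (by omega)]
    rw [Nat.add_sub_cancel] at hmid
    rw [Finset.sum_congr rfl hmid, ← Finset.mul_sum]
    have hb := incBeta_eq (s + 1) (L + 1) (by omega) x
    have htop : ((L + 2 : ℕ) : ℝ) * PsiR r (L + 1 + 1) (L + 2) *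
        incBeta (L + 2 - (s + 1)) (s + 1) x
        = r * (ptail (1 - x) (s + 1) (L + 1) / ((L : ℝ) + 1) + ptail (1 - x) (s + 1) (L + 1)) := by
      rw [show L + 2 = L + 1 + 1 from rfl, hb]
      unfold PsiR
      rw [if_neg (by omega), if_neg (by omega), if_pos rfl]
      push_cast
      have : (L : ℝ) + 1 ≠ 0 := by positivity
      rw [add_sub_cancel_right]
      field_simp
      ring
    rw [htop]; ring
  have hsplit : ∑ n ∈ Finset.range N, ptail (1 - x) (s + 1) (n + 1) / ((n : ℝ) + 1)
      = ∑ i ∈ Finset.range s, 1 / ((i : ℝ) + 1)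
        + ∑ n ∈ Finset.Ico s N, ptail (1 - x) (s + 1) (n + 1) / ((n : ℝ) + 1) := by
    rw [← Finset.sum_range_add_sum_Ico _ (by omega : s ≤ N)]
    congr 1
    apply Finset.sum_congr rfl
    intro i hi
    simp only [Finset.mem_range] at hi
    rw [ptail_one _ _ _ (by omega)]
  rw [hsplit] at hmain
  have hrpos : (0 : ℝ) < r := by exact_mod_cast hr
  unfold Sfun
  rw [hfirst]
  have : 0 < (r : ℝ) * ((∑ n ∈ Finset.Ico s N, ptail (1 - x) (s + 1) (n + 1) / ((n : ℝ) + 1)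
          + ptail (1 - x) (s + 1) N) + Real.log (1 - x)) := by
    apply mul_pos hrpos; linarith
  rw [mul_add] at this
  linarith
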